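/- In the sum-variant with k = 2 facilities, for every number of groups m ≥ 2 with m ∉ {3,5}, the mechanism M_m(1/2, √2−1, 2−√2) has approximation ratio at most 1 + √2: on every instance with m groups its output has social cost at most (1+√2) times the minimum social cost over all feasible solutions. -/

import Mathlib

open Finset

noncomputable section

/-- A distributed facility location setting for `k` facilities and `m` groups:
`n ≥ 2` agents on the real line, partitioned into `m ≥ k` disjoint nonempty groups. -/
structure FLSetting (k m : ℕ) where
  n : ℕ
  hn : 2 ≤ n
  hmk : k ≤ m
  grp : Fin n → Fin m
  surj : Function.Surjective grp

/-- A two-phase mechanism for `k` facilities: for each number `m` of groups, a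
representative function on finite multisets of reals, and a selection function
producing the `k` facility locations from the multiset of representatives. -/
structure TwoPhase (k : ℕ) where
  rep : ℕ → Multiset ℝ → ℝ
  sel : ℕ → Multiset ℝ → Fin k → ℝ

/-- Validity of a two-phase mechanism: the representative of a nonempty multiset
is one of its elements, and the selected facility locations form a sub-multiset
of the representatives. -/
def TwoPhase.Valid {k : ℕ} (M : TwoPhase k) : Prop :=
  (∀ (m : ℕ) (S : Multiset ℝ), S ≠ 0 → M.rep m S ∈ S) ∧
  (∀ (m : ℕ) (R : Multiset ℝ), Multiset.card R = m → k ≤ m →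
    (↑(List.ofFn (M.sel m R)) : Multiset ℝ) ≤ R)

/-- The multiset of (reported) positions of the agents in group `j`. -/
def groupMS {k m : ℕ} (S : FLSetting k m) (x : Fin S.n → ℝ) (j : Fin m) : Multiset ℝ :=
  (Finset.univ.filter (fun i => S.grp i = j)).val.map x

/-- The number of agents in group `j`. -/
def groupSize {k m : ℕ} (S : FLSetting k m) (j : Fin m) : ℕ :=
  (Finset.univ.filter (fun i => S.grp i = j)).card

/-- The multiset of the `m` group representatives. -/
def repsMS {k m : ℕ} (M : TwoPhase k) (S : FLSetting k m) (x : Fin S.n → ℝ) : Multiset ℝ :=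
  (Finset.univ.val.map fun j : Fin m => M.rep m (groupMS S x j))

/-- The facility locations output by mechanism `M` on reported positions `x`. -/
def outcome {k m : ℕ} (M : TwoPhase k) (S : FLSetting k m) (x : Fin S.n → ℝ) : Fin k → ℝ :=
  M.sel m (repsMS M S x)

/-- Sum-variant individual cost: total distance to all facilities. -/
def sumCost (k : ℕ) (xi : ℝ) (y : Fin k → ℝ) : ℝ := ∑ ℓ, |xi - y ℓ|

/-- Max-variant individual cost: distance to the farthest facility. -/
def maxCost (k : ℕ) (xi : ℝ) (y : Fin k → ℝ) : ℝ := ⨆ ℓ, |xi - y ℓ|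

/-- Social cost: average over groups of the average individual cost within the group. -/
def SC {k m : ℕ} (cost : ℝ → (Fin k → ℝ) → ℝ) (S : FLSetting k m) (x : Fin S.n → ℝ)
    (y : Fin k → ℝ) : ℝ :=
  (1 / (m : ℝ)) * ∑ j : Fin m,
    (1 / (groupSize S j : ℝ)) *
      ∑ i ∈ Finset.univ.filter (fun i => S.grp i = j), cost (x i) y

/-- A feasible solution opens the `k` facilities at the positions of `k` distinct agents. -/
def Feasible {k m : ℕ} (S : FLSetting k m) (x : Fin S.n → ℝ) (y : Fin k → ℝ) : Prop :=
  ∃ f : Fin k → Fin S.n, Function.Injective f ∧ ∀ ℓ, y ℓ = x (f ℓ)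

/-- Strategyproofness with respect to an individual cost function. -/
def Strategyproof {k : ℕ} (cost : ℝ → (Fin k → ℝ) → ℝ) (M : TwoPhase k) : Prop :=
  ∀ (m : ℕ) (S : FLSetting k m) (x : Fin S.n → ℝ) (i : Fin S.n) (x' : ℝ),
    cost (x i) (outcome M S x) ≤ cost (x i) (outcome M S (Function.update x i x'))

/-- Strategyproofness restricted to instances with exactly `m` groups. -/
def StrategyproofOn {k : ℕ} (cost : ℝ → (Fin k → ℝ) → ℝ) (M : TwoPhase k) (m : ℕ) : Prop :=
  ∀ (S : FLSetting k m) (x : Fin S.n → ℝ) (i : Fin S.n) (x' : ℝ),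
    cost (x i) (outcome M S x) ≤ cost (x i) (outcome M S (Function.update x i x'))

/-- The `t`-th leftmost element of a multiset of reals (1-indexed). -/
def kthLeftmost (S : Multiset ℝ) (t : ℕ) : ℝ := (S.sort (· ≤ ·)).getD (t - 1) 0

/-- The mechanism `M_m(θ, ℓ, r)` for two facilities: each group's representative is the
position of its `⌈θ·n_g⌉`-th leftmost agent, and the facilities are opened at the
`⌈ℓm⌉`-th and `⌈rm⌉`-th leftmost representative locations. -/
def Mmech (θ l r : ℝ) : TwoPhase 2 where
  rep := fun _ S => kthLeftmost S ⌈θ * (Multiset.card S : ℝ)⌉₊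
  sel := fun m R => ![kthLeftmost R ⌈l * (m : ℝ)⌉₊, kthLeftmost R ⌈r * (m : ℝ)⌉₊]

lemma length_le_countP_of_sublist_sort {p : ℝ → Prop} [DecidablePred p] {M : Multiset ℝ} {L : List ℝ}
    (hL : L.Sublist (M.sort (· ≤ ·))) (hp : ∀ z ∈ L, p z) : L.length ≤ M.countP p := by
  have h1 : L.countP (fun z => decide (p z)) = L.length :=
    List.countP_eq_length.2 fun z hz => decide_eq_true (hp z hz)
  have h2 : M.countP p = (M.sort (· ≤ ·)).countP (fun z => decide (p z)) := by
    conv_lhs => rw [← Multiset.sort_eq M (· ≤ ·)]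
    rw [Multiset.coe_countP]
  rw [h2, ← h1]
  exact hL.countP_le

lemma kthLeftmost_eq_getElem {M : Multiset ℝ} {t : ℕ} (ht : t - 1 < M.card) :
    kthLeftmost M t =
      (M.sort (· ≤ ·))[t - 1]'(by rw [Multiset.length_sort]; exact ht) := by
  rw [kthLeftmost, List.getD_eq_getElem]

lemma sort_getElem_mono (M : Multiset ℝ) {i j : ℕ} (hij : i ≤ j)
    (hj : j < (M.sort (· ≤ ·)).length) :
    (M.sort (· ≤ ·))[i]'(hij.trans_lt hj) ≤ (M.sort (· ≤ ·))[j] := by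
  rcases hij.eq_or_lt with rfl | h
  · exact le_rfl
  · exact List.pairwise_iff_getElem.1 (Multiset.pairwise_sort M (· ≤ ·)) i j _ hj h

lemma kthLeftmost_mono {M : Multiset ℝ} {s t : ℕ} (hst : s ≤ t) (ht0 : 1 ≤ t) (ht : t ≤ M.card) :
    kthLeftmost M s ≤ kthLeftmost M t := by
  rw [kthLeftmost_eq_getElem (by omega), kthLeftmost_eq_getElem (by omega)]
  exact sort_getElem_mono M (by omega) _

lemma le_countP_le_kthLeftmost {M : Multiset ℝ} {t : ℕ} (ht0 : 1 ≤ t) (ht : t ≤ M.card) :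
    t ≤ M.countP (· ≤ kthLeftmost M t) := by
  have h := length_le_countP_of_sublist_sort (p := (· ≤ kthLeftmost M t))
    (List.take_sublist t (M.sort (· ≤ ·))) (fun z hz => by
      obtain ⟨i, hi, rfl⟩ := List.mem_take_iff_getElem.1 hz
      rw [kthLeftmost_eq_getElem (by omega)]
      exact sort_getElem_mono M (by omega) _)
  rwa [List.length_take, Multiset.length_sort, min_eq_left ht] at h

lemma le_countP_kthLeftmost_le {M : Multiset ℝ} {t : ℕ} (ht0 : 1 ≤ t) (ht : t ≤ M.card) :
    M.card + 1 ≤ M.countP (kthLeftmost M t ≤ ·) + t := by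
  have h := length_le_countP_of_sublist_sort (p := (kthLeftmost M t ≤ ·))
    (List.drop_sublist (t - 1) (M.sort (· ≤ ·))) (fun z hz => by
      obtain ⟨i, hi, rfl⟩ := List.mem_drop_iff_getElem.1 hz
      rw [kthLeftmost_eq_getElem (by omega)]
      exact sort_getElem_mono M (by omega) _)
  rw [List.length_drop, Multiset.length_sort] at h
  omega

lemma ceil_mul_card_bounds {c : ℝ} (hc0 : 0 < c) (hc1 : c ≤ 1) {n : ℕ} (hn : 0 < n) :
    1 ≤ ⌈c * (n : ℝ)⌉₊ ∧ ⌈c * (n : ℝ)⌉₊ ≤ n := by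
  have hn' : (0 : ℝ) < n := by exact_mod_cast hn
  exact ⟨Nat.one_le_ceil_iff.2 (by positivity), Nat.ceil_le.2 (by nlinarith)⟩

/-- At least a fraction `c` of the elements lie weakly left of the `c`-quantile. -/
lemma mul_card_le_countP_le {M : Multiset ℝ} {c : ℝ} (hc0 : 0 < c) (hc1 : c ≤ 1)
    (hM : 0 < M.card) :
    c * (M.card : ℝ) ≤ M.countP (· ≤ kthLeftmost M ⌈c * (M.card : ℝ)⌉₊) := by
  obtain ⟨h1, h2⟩ := ceil_mul_card_bounds hc0 hc1 hM
  exact (Nat.le_ceil _).trans (by exact_mod_cast le_countP_le_kthLeftmost h1 h2)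

/-- At least a fraction `1 - c` of the elements lie weakly right of the `c`-quantile. -/
lemma mul_card_le_countP_ge {M : Multiset ℝ} {c : ℝ} (hc0 : 0 < c) (hc1 : c ≤ 1)
    (hM : 0 < M.card) :
    (1 - c) * (M.card : ℝ) ≤ M.countP (kthLeftmost M ⌈c * (M.card : ℝ)⌉₊ ≤ ·) := by
  obtain ⟨h1, h2⟩ := ceil_mul_card_bounds hc0 hc1 hM
  have h3 := Nat.ceil_lt_add_one (a := c * (M.card : ℝ)) (by positivity)
  have h4 : (M.card : ℝ) + 1 ≤ M.countP (kthLeftmost M ⌈c * (M.card : ℝ)⌉₊ ≤ ·)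
      + (⌈c * (M.card : ℝ)⌉₊ : ℝ) := by exact_mod_cast le_countP_kthLeftmost_le h1 h2
  linarith

lemma sum_le_of_pointwise_slack {ι : Type*} [Fintype ι] {w f g h u v : ι → ℝ}
    {C α β p q : ℝ} (hw : ∀ i, 0 ≤ w i) (hw1 : ∑ i, w i = 1) (hα : 0 ≤ α) (hβ : 0 ≤ β)
    (hu : 1 ≤ p * ∑ i, w i * u i) (hv : 1 ≤ q * ∑ i, w i * v i)
    (hpt : ∀ i, f i + g i ≤ C * h i + (α * (1 - p * u i) + β * (1 - q * v i))) :
    ∑ i, w i * f i + ∑ i, w i * g i ≤ C * ∑ i, w i * h i := by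
  have h1 : ∑ i, w i * (f i + g i) ≤
      ∑ i, w i * (C * h i + (α * (1 - p * u i) + β * (1 - q * v i))) :=
    Finset.sum_le_sum fun i _ => mul_le_mul_of_nonneg_left (hpt i) (hw i)
  have h2 : ∑ i, w i * (C * h i + (α * (1 - p * u i) + β * (1 - q * v i))) =
      C * ∑ i, w i * h i + (α * (∑ i, w i - p * ∑ i, w i * u i)
        + β * (∑ i, w i - q * ∑ i, w i * v i)) := by
    simp only [Finset.mul_sum, ← Finset.sum_sub_distrib, ← Finset.sum_add_distrib]
    exact Finset.sum_congr rfl fun i _ => by ring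
  have h3 : ∑ i, w i * (f i + g i) = ∑ i, w i * f i + ∑ i, w i * g i := by
    simp only [mul_add, Finset.sum_add_distrib]
  rw [h2, h3, hw1] at h1
  nlinarith [mul_nonneg hα (sub_nonneg.2 hu), mul_nonneg hβ (sub_nonneg.2 hv)]

/-- Two locations splitting a weighted point set at suitable quantiles have total cost at most
`1 + √2` times that of placing both facilities at an arbitrary common point `o`. -/
lemma sum_abs_le_of_quantiles {ι : Type*} [Fintype ι] {w x : ι → ℝ} {a b : ℝ} (o : ℝ)
    (hw : ∀ i, 0 ≤ w i) (hw1 : ∑ i, w i = 1) (hab : a ≤ b)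
    (ha : (√2 - 1) / 2 ≤ ∑ i, w i * if x i ≤ a then 1 else 0)
    (ha' : (1 - (√2 - 1)) / 2 ≤ ∑ i, w i * if a ≤ x i then 1 else 0)
    (hb : (2 - √2) / 2 ≤ ∑ i, w i * if x i ≤ b then 1 else 0)
    (hb' : (1 - (2 - √2)) / 2 ≤ ∑ i, w i * if b ≤ x i then 1 else 0) :
    ∑ i, w i * |x i - a| + ∑ i, w i * |x i - b| ≤
      (2 * (1 + √2)) * ∑ i, w i * |x i - o| := by
  have hs : √2 * √2 = 2 := Real.mul_self_sqrt (by norm_num)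
  have hs0 : 0 ≤ √2 := Real.sqrt_nonneg 2
  have hnarrow : ∀ {z : ℝ}, (√2 - 1) / 2 ≤ z → 1 ≤ (2 + 2 * √2) * z := fun hz => by nlinarith
  have hwide : ∀ {z : ℝ}, (2 - √2) / 2 ≤ z → 1 ≤ (2 + √2) * z := fun hz => by nlinarith
  rcases le_total o a with hoa | hao
  · refine sum_le_of_pointwise_slack (α := 2 * (a - o)) (β := b - a) hw hw1 (by linarith)
      (by linarith)
      (hwide (z := ∑ i, w i * if a ≤ x i then 1 else 0) (by linarith)) (hnarrow (z := ∑ i, w i * if b ≤ x i then 1 else 0)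
      (by linarith)) fun i => ?_
    have key : (a - o) * (if a ≤ x i then 1 else 0) + (b - a) * (if b ≤ x i then 1 else 0)
        ≤ |x i - o| := by split_ifs <;> cases abs_cases (x i - o) <;> linarith
    have key' : |x i - a| + |x i - b| ≤ 2 * |x i - o|
        + 2 * (a - o) * (1 - 2 * (if a ≤ x i then 1 else 0))
        + (b - a) * (1 - 2 * (if b ≤ x i then 1 else 0)) := by
      split_ifs <;> cases abs_cases (x i - o) <;> cases abs_cases (x i - a) <;>
        cases abs_cases (x i - b) <;> linarith
    linarith [mul_le_mul_of_nonneg_left key hs0]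
  rcases le_total o b with hob | hbo
  · refine sum_le_of_pointwise_slack (α := o - a) (β := b - o) hw hw1 (by linarith)
      (by linarith) (hnarrow ha) (hnarrow (z := ∑ i, w i * if b ≤ x i then 1 else 0)
      (by linarith)) fun i => ?_
    have key : (o - a) * (if x i ≤ a then 1 else 0) + (b - o) * (if b ≤ x i then 1 else 0)
        ≤ |x i - o| := by split_ifs <;> cases abs_cases (x i - o) <;> linarith
    have key' : |x i - a| + |x i - b| ≤ 2 * |x i - o|
        + (o - a) * (1 - 2 * (if x i ≤ a then 1 else 0))
        + (b - o) * (1 - 2 * (if b ≤ x i then 1 else 0)) := by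
      split_ifs <;> cases abs_cases (x i - o) <;> cases abs_cases (x i - a) <;>
        cases abs_cases (x i - b) <;> linarith
    linarith [mul_le_mul_of_nonneg_left key hs0]
  · refine sum_le_of_pointwise_slack (α := 2 * (o - b)) (β := b - a) hw hw1 (by linarith)
      (by linarith) (hwide hb) (hnarrow ha) fun i => ?_
    have key : (o - b) * (if x i ≤ b then 1 else 0) + (b - a) * (if x i ≤ a then 1 else 0)
        ≤ |x i - o| := by split_ifs <;> cases abs_cases (x i - o) <;> linarith
    have key' : |x i - a| + |x i - b| ≤ 2 * |x i - o|
        + 2 * (o - b) * (1 - 2 * (if x i ≤ b then 1 else 0))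
        + (b - a) * (1 - 2 * (if x i ≤ a then 1 else 0)) := by
      split_ifs <;> cases abs_cases (x i - o) <;> cases abs_cases (x i - a) <;>
        cases abs_cases (x i - b) <;> linarith
    linarith [mul_le_mul_of_nonneg_left key hs0]

lemma groupSize_pos {k m : ℕ} (S : FLSetting k m) (j : Fin m) : 0 < groupSize S j := by
  obtain ⟨i, hi⟩ := S.surj j
  exact Finset.card_pos.2 ⟨i, by simpa using hi⟩

lemma card_groupMS {k m : ℕ} (S : FLSetting k m) (x : Fin S.n → ℝ) (j : Fin m) :
    (groupMS S x j).card = groupSize S j := by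
  rw [groupMS, groupSize, Multiset.card_map]
  rfl

/-- The weight of an agent in the social cost. -/
def agentWeight {k m : ℕ} (S : FLSetting k m) (i : Fin S.n) : ℝ :=
  (1 / (m : ℝ)) * (1 / (groupSize S (S.grp i) : ℝ))

lemma sum_agentWeight_mul {k m : ℕ} (S : FLSetting k m) (f : Fin S.n → ℝ) :
    ∑ i, agentWeight S i * f i = (1 / (m : ℝ)) * ∑ j : Fin m, (1 / (groupSize S j : ℝ)) *
      ∑ i ∈ Finset.univ.filter (fun i => S.grp i = j), f i := by
  rw [← Finset.sum_fiberwise Finset.univ S.grp, Finset.mul_sum]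
  refine Finset.sum_congr rfl fun j _ => ?_
  rw [Finset.mul_sum, Finset.mul_sum]
  refine Finset.sum_congr rfl fun i hi => ?_
  rw [agentWeight, (Finset.mem_filter.1 hi).2, mul_assoc]

lemma sum_agentWeight {k m : ℕ} (hm : 0 < m) (S : FLSetting k m) : ∑ i, agentWeight S i = 1 := by
  have h := sum_agentWeight_mul S (fun _ => 1)
  simp only [mul_one, Finset.sum_const, nsmul_eq_mul] at h
  have h1 : ∀ j : Fin m, 1 / (groupSize S j : ℝ) *
      ((Finset.univ.filter (fun i => S.grp i = j)).card : ℝ) = 1 := fun j =>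
    one_div_mul_cancel (Nat.cast_ne_zero.2 (groupSize_pos S j).ne')
  rw [h, Finset.sum_congr rfl fun j _ => h1 j]
  simp [hm.ne']

lemma SC_sumCost_two {m : ℕ} (S : FLSetting 2 m) (x : Fin S.n → ℝ) (y : Fin 2 → ℝ) :
    SC (sumCost 2) S x y =
      ∑ i, agentWeight S i * |x i - y 0| + ∑ i, agentWeight S i * |x i - y 1| := by
  rw [← Finset.sum_add_distrib]
  simp only [← mul_add]
  rw [sum_agentWeight_mul]
  simp only [SC, sumCost, Fin.sum_univ_two]

/-- If a fraction `c` of the representatives satisfy `p`, and in each such group at least half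
of the agents satisfy `p`, then agents satisfying `p` have total weight at least `c / 2`. -/
lemma half_le_sum_agentWeight {k m : ℕ} (hm : 0 < m) (S : FLSetting k m) (x : Fin S.n → ℝ)
    (M : TwoPhase k) {c : ℝ} {p : ℝ → Prop} [DecidablePred p]
    (hc : c * m ≤ (repsMS M S x).countP p)
    (hp : ∀ j, p (M.rep m (groupMS S x j)) →
      1 / 2 * (groupSize S j : ℝ) ≤ (groupMS S x j).countP p) :
    c / 2 ≤ ∑ i, agentWeight S i * if p (x i) then 1 else 0 := by
  have hm' : (0 : ℝ) < m := by exact_mod_cast hm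
  rw [sum_agentWeight_mul]
  have h1 : ∀ j : Fin m, (1 / 2) * (if p (M.rep m (groupMS S x j)) then (1 : ℝ) else 0) ≤
      (1 / (groupSize S j : ℝ)) *
        ∑ i ∈ Finset.univ.filter (fun i => S.grp i = j), (if p (x i) then (1 : ℝ) else 0) := by
    intro j
    have hpos : (0 : ℝ) < groupSize S j := by exact_mod_cast groupSize_pos S j
    have hcount : ((groupMS S x j).countP p : ℝ) =
        ∑ i ∈ Finset.univ.filter (fun i => S.grp i = j), (if p (x i) then (1 : ℝ) else 0) := by
      rw [groupMS, Multiset.countP_map, Finset.sum_boole]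
      rfl
    rw [← hcount]
    split_ifs with h
    · rw [mul_one, one_div_mul_eq_div (groupSize S j : ℝ), le_div_iff₀ hpos]
      linarith [hp j h]
    · rw [mul_zero]
      positivity
  have h2 : ((repsMS M S x).countP p : ℝ) =
      ∑ j : Fin m, (if p (M.rep m (groupMS S x j)) then (1 : ℝ) else 0) := by
    rw [repsMS, Multiset.countP_map, Finset.sum_boole]
    rfl
  have h3 := Finset.sum_le_sum fun j (_ : j ∈ Finset.univ) => h1 j
  rw [← Finset.mul_sum, ← h2] at h3
  rw [one_div_mul_eq_div, le_div_iff₀ hm']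
  linarith

lemma countP_mono_of_imp {M : Multiset ℝ} {p q : ℝ → Prop} [DecidablePred p] [DecidablePred q]
    (h : ∀ z, p z → q z) : M.countP p ≤ M.countP q := by
  rw [Multiset.countP_eq_card_filter, Multiset.countP_eq_card_filter]
  exact Multiset.card_le_card (Multiset.monotone_filter_right M h)

lemma card_repsMS {k m : ℕ} (M : TwoPhase k) (S : FLSetting k m) (x : Fin S.n → ℝ) :
    (repsMS M S x).card = m := by
  simp [repsMS]

lemma half_le_sum_agentWeight_le {m : ℕ} (hm : 0 < m) (S : FLSetting 2 m) (x : Fin S.n → ℝ)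
    (l r : ℝ) {c : ℝ} (hc0 : 0 < c) (hc1 : c ≤ 1) :
    c / 2 ≤ ∑ i, agentWeight S i *
      if x i ≤ kthLeftmost (repsMS (Mmech (1 / 2) l r) S x) ⌈c * (m : ℝ)⌉₊ then 1 else 0 := by
  refine half_le_sum_agentWeight (p := (· ≤ kthLeftmost _ _)) hm S x (Mmech (1 / 2) l r) ?_ ?_
  · simpa only [card_repsMS] using mul_card_le_countP_le (M := repsMS (Mmech (1 / 2) l r) S x)
      hc0 hc1 (by rwa [card_repsMS])
  · intro j hj
    have h := mul_card_le_countP_le (M := groupMS S x j) (c := 1 / 2) (by norm_num) (by norm_num)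
      (by rw [card_groupMS]; exact groupSize_pos S j)
    rw [← card_groupMS S x j]
    refine h.trans ?_
    exact_mod_cast countP_mono_of_imp fun z hz => le_trans hz hj

lemma half_le_sum_agentWeight_ge {m : ℕ} (hm : 0 < m) (S : FLSetting 2 m) (x : Fin S.n → ℝ)
    (l r : ℝ) {c : ℝ} (hc0 : 0 < c) (hc1 : c ≤ 1) :
    (1 - c) / 2 ≤ ∑ i, agentWeight S i *
      if kthLeftmost (repsMS (Mmech (1 / 2) l r) S x) ⌈c * (m : ℝ)⌉₊ ≤ x i then 1 else 0 := by
  refine half_le_sum_agentWeight (p := (kthLeftmost _ _ ≤ ·)) hm S x (Mmech (1 / 2) l r) ?_ ?_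
  · simpa only [card_repsMS] using mul_card_le_countP_ge (M := repsMS (Mmech (1 / 2) l r) S x)
      hc0 hc1 (by rwa [card_repsMS])
  · intro j hj
    have h := mul_card_le_countP_ge (M := groupMS S x j) (c := 1 / 2) (by norm_num) (by norm_num)
      (by rw [card_groupMS]; exact groupSize_pos S j)
    rw [← card_groupMS S x j]
    refine le_trans (by linarith) (h.trans ?_)
    exact_mod_cast countP_mono_of_imp fun z hz => le_trans hj hz

/-- In the sum-variant with two facilities, for every `m ≥ 2` with `m ∉ {3,5}`, the
mechanism `M_m(1/2, √2−1, 2−√2)` has approximation ratio at most `1 + √2`. -/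
theorem stmt4 (m : ℕ) (hm : 2 ≤ m) (hm3 : m ≠ 3) (hm5 : m ≠ 5)
    (S : FLSetting 2 m) (x : Fin S.n → ℝ) (y : Fin 2 → ℝ) (hy : Feasible S x y) :
    SC (sumCost 2) S x (outcome (Mmech (1 / 2) (Real.sqrt 2 - 1) (2 - Real.sqrt 2)) S x)
      ≤ (1 + Real.sqrt 2) * SC (sumCost 2) S x y := by
  have hm0 : 0 < m := by omega
  have hs1 : 1 < √2 := Real.lt_sqrt_of_sq_lt (by norm_num)
  have hs2 : √2 ≤ 3 / 2 := Real.sqrt_le_iff.2 ⟨by norm_num, by norm_num⟩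
  set R := repsMS (Mmech (1 / 2) (√2 - 1) (2 - √2)) S x
  have hRm : R.card = m := card_repsMS _ S x
  obtain ⟨hr1, hr2⟩ := ceil_mul_card_bounds (c := 2 - √2) (by linarith) (by linarith) hm0
  have hab : kthLeftmost R ⌈(√2 - 1) * (m : ℝ)⌉₊ ≤ kthLeftmost R ⌈(2 - √2) * (m : ℝ)⌉₊ :=
    kthLeftmost_mono (Nat.ceil_mono (mul_le_mul_of_nonneg_right (by linarith) (by positivity)))
      hr1 (hRm ▸ hr2)
  have hw : ∀ i, 0 ≤ agentWeight S i := fun i => by unfold agentWeight; positivity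
  have key := fun o => sum_abs_le_of_quantiles (x := x) o hw (sum_agentWeight hm0 S) hab
    (half_le_sum_agentWeight_le hm0 S x _ _ (by linarith) (by linarith))
    (half_le_sum_agentWeight_ge hm0 S x _ _ (by linarith) (by linarith))
    (half_le_sum_agentWeight_le hm0 S x _ _ (by linarith) (by linarith))
    (half_le_sum_agentWeight_ge hm0 S x _ _ (by linarith) (by linarith))
  rw [SC_sumCost_two, SC_sumCost_two]
  change ∑ i, agentWeight S i * |x i - kthLeftmost R ⌈(√2 - 1) * (m : ℝ)⌉₊|
    + ∑ i, agentWeight S i * |x i - kthLeftmost R ⌈(2 - √2) * (m : ℝ)⌉₊| ≤ _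
  linarith [key (y 0), key (y 1)]

end
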